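/- Let S be a complete c-semiring, Σ an alphabet, and A : List Σ → S a formal power series. Let B = (P, η, J, G) be any weighted automaton over S whose behaviour satisfies |B| ≤ A. For p ∈ P set Y_p = Past_B(p)\A and X_p = A/Y_p. Then for every p ∈ P the pair (X_p, Y_p) is a factorization of A, and the map φ(p) = (X_p, Y_p) is a morphism from B into the universal weighted automaton U_A: J(p) ≤ J_A(φ p), G(p) ≤ G_A(φ p), and η(p, σ, q) ≤ η_A(φ p, σ, φ q) for all p, q ∈ P and σ ∈ Σ. -/

import Mathlib

/-!
Everything reduces to pointwise adjunctions: `c ≤ (X \ A)(v)` iff `X(u) * c ≤ A(uv)` for all `u`,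
and symmetrically for `A / Y`. For any series `X`, the pair `(A / (X \ A), X \ A)` is then a
factorization of `A`, with `X ≤ A / (X \ A)`, which is the usual Galois closure.

For the morphism, write `Y_p = Past(p) \ A` and `X_p = A / Y_p`. Initial weights follow from
`J p ≤ Past(p)(ε)` and `Past(p) ≤ X_p`; final weights from `Past(p)(u) * G p ≤ |B|(u) ≤ A(u)`.
For transitions, `Past(p)(u) * η(p,σ,q) ≤ Past(q)(uσ)` gives `η(p,σ,q) * Y_q(v) ≤ Y_p(σv)`, whence
`X_p(u) * η(p,σ,q) * Y_q(v) ≤ X_p(u) * Y_p(σv) ≤ A(uσv)`.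
-/

/-- A complete c-semiring: a complete lattice with a commutative monoid
multiplication distributing over arbitrary suprema, whose unit is the top element.
Addition is join, zero is `⊥`, infinitary sums are suprema. -/
class CompleteCSemiring (S : Type*) extends CompleteLattice S, CommMonoid S where
  mul_sSup : ∀ (a : S) (s : Set S), a * sSup s = ⨆ b ∈ s, a * b
  one_eq_top : (1 : S) = ⊤

namespace FPS

open Classical
noncomputable section

variable {S : Type*} [CompleteCSemiring S] {α : Type*}

/-- Cauchy product of formal power series. -/
def cauchy (A B : List α → S) : List α → S :=
  fun w => ⨆ (u : List α) (v : List α) (_ : u ++ v = w), A u * B v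

/-- Left quotient of `A` by the series `X`. -/
def lquot (X A : List α → S) : List α → S := fun v => ⨆ u : List α, X u * A (u ++ v)

/-- Right quotient of `A` by the series `Y`. -/
def rquot (A Y : List α → S) : List α → S := fun v => ⨆ u : List α, A (v ++ u) * Y u

/-- Left residual `X \ A`. -/
def lres (X A : List α → S) : List α → S := sSup {Z | cauchy X Z ≤ A}

/-- Right residual `A / Y`. -/
def rres (A Y : List α → S) : List α → S := sSup {Z | cauchy Z Y ≤ A}

/-- Residual in the semiring `S`: `a ⇨ b`. -/
def resid (a b : S) : S := sSup {x | a * x ≤ b}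

/-- Inclusion degree of the series `f` into `g`. -/
def incl (f g : List α → S) : S := ⨅ u : List α, resid (f u) (g u)

/-- A word viewed as a series: `1` at `u` and `⊥` elsewhere. -/
def wordSeries (u : List α) : List α → S := fun w => if w = u then 1 else ⊥

/-- Reversal of a series. -/
def rev (A : List α → S) : List α → S := fun w => A w.reverse

/-- Extended transition map of a weighted automaton. -/
def deltaStar {Q : Type*} (δ : Q → α → Q → S) : Q → List α → Q → S
  | q, [], p => ⨆ _ : q = p, 1
  | q, a :: w, p => ⨆ r : Q, δ q a r * deltaStar δ r w p

/-- Behaviour of a weighted automaton. -/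
def behavior {Q : Type*} (δ : Q → α → Q → S) (I F : Q → S) : List α → S :=
  fun w => ⨆ (p : Q) (q : Q), I p * deltaStar δ p w q * F q

/-- Past of a state of a weighted automaton. -/
def past {Q : Type*} (δ : Q → α → Q → S) (I : Q → S) (q : Q) : List α → S :=
  fun w => ⨆ p : Q, I p * deltaStar δ p w q

/-- Future of a state of a weighted automaton. -/
def fut {Q : Type*} (δ : Q → α → Q → S) (F : Q → S) (q : Q) : List α → S :=
  fun w => ⨆ p : Q, deltaStar δ q w p * F p

/-- A series is DWA-regular if it is recognized by a finite deterministic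
weighted automaton. -/
def DWARegular (A : List α → S) : Prop :=
  ∃ (Q : Type) (_ : Fintype Q) (δ : Q → α → Q) (q0 : Q) (F : Q → S),
    ∀ w : List α, A w = F (w.foldl δ q0)

/-- A series is regular if it is the behaviour of a finite weighted automaton. -/
def Regular (A : List α → S) : Prop :=
  ∃ (Q : Type) (_ : Fintype Q) (δ : Q → α → Q → S) (I F : Q → S),
    behavior δ I F = A

/-- `(X, Y)` is a factorization of `A`. -/
def IsFactorization (A X Y : List α → S) : Prop :=
  cauchy X Y ≤ A ∧
    ∀ X' Y' : List α → S, X ≤ X' → Y ≤ Y' → cauchy X' Y' ≤ A → X' = X ∧ Y' = Y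

/-- The set of factorizations of `A` (states of the universal weighted automaton). -/
def Fact (A : List α → S) := {p : (List α → S) × (List α → S) // IsFactorization A p.1 p.2}

/-- Initial weights of the universal weighted automaton. -/
def JA (A : List α → S) (p : Fact A) : S := p.1.1 []

/-- Final weights of the universal weighted automaton. -/
def GA (A : List α → S) (p : Fact A) : S := p.1.2 []

/-- Transition weights of the universal weighted automaton. -/
def etaA (A : List α → S) (p : Fact A) (σ : α) (q : Fact A) : S :=
  incl (cauchy (cauchy p.1.1 (wordSeries [σ])) q.1.2) A

/-- The relation `u ≡_A v`. -/
def eqA (A : List α → S) : Setoid (List α) where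
  r u v := ∀ w, A (u ++ w) = A (v ++ w)
  iseqv := ⟨fun _ _ => rfl, fun h w => (h w).symm, fun h1 h2 w => (h1 w).trans (h2 w)⟩

end

end FPS

namespace FPS

section Semiring

variable {S : Type*} [CompleteCSemiring S]

theorem mul_iSup_c {ι : Sort*} (a : S) (f : ι → S) : a * (⨆ i, f i) = ⨆ i, a * f i := by
  rw [iSup, CompleteCSemiring.mul_sSup, iSup_range]

theorem iSup_mul_c {ι : Sort*} (a : S) (f : ι → S) : (⨆ i, f i) * a = ⨆ i, f i * a := by
  simp only [mul_comm _ a, mul_iSup_c]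

theorem mul_bot_c (a : S) : a * ⊥ = ⊥ := by
  have h := CompleteCSemiring.mul_sSup a ∅
  simpa using h

theorem mul_le_mul_left_c {b c : S} (a : S) (h : b ≤ c) : a * b ≤ a * c := by
  have h1 := CompleteCSemiring.mul_sSup a {b, c}
  rw [sSup_pair, sup_eq_right.2 h, iSup_pair] at h1
  rw [h1]
  exact le_sup_left

theorem mul_le_mul_c {a b c d : S} (h : a ≤ b) (h' : c ≤ d) : a * c ≤ b * d := by
  refine (mul_le_mul_left_c a h').trans ?_
  rw [mul_comm a, mul_comm b]
  exact mul_le_mul_left_c d h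

end Semiring

section Series

variable {S : Type*} [CompleteCSemiring S] {α : Type*}

theorem cauchy_le_iff {X Y A : List α → S} :
    cauchy X Y ≤ A ↔ ∀ u v, X u * Y v ≤ A (u ++ v) := by
  simp only [Pi.le_def, cauchy, iSup_le_iff]
  exact ⟨fun h u v => h _ u v rfl, fun h _ u v e => e ▸ h u v⟩

theorem le_lres_apply_iff {X A : List α → S} {c : S} {v : List α} :
    c ≤ lres X A v ↔ ∀ u, X u * c ≤ A (u ++ v) := by
  classical
  constructor
  · intro h u
    refine (mul_le_mul_left_c _ h).trans ?_
    rw [lres, sSup_apply, mul_iSup_c]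
    exact iSup_le fun Z => cauchy_le_iff.1 Z.2 u v
  · intro h
    -- `c` placed at the word `v` and `⊥` elsewhere is one of the series in the supremum
    have hZ : cauchy X (fun w => if w = v then c else ⊥) ≤ A := by
      refine cauchy_le_iff.2 fun u w => ?_
      by_cases e : w = v
      · simpa [e] using h u
      · simp [e, mul_bot_c]
    have hle : (fun w => if w = v then c else ⊥) ≤ lres X A := le_sSup hZ
    exact (if_pos rfl).ge.trans (hle v)

theorem le_rres_apply_iff {Y A : List α → S} {c : S} {u : List α} :
    c ≤ rres A Y u ↔ ∀ v, c * Y v ≤ A (u ++ v) := by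
  classical
  constructor
  · intro h v
    refine (mul_le_mul_c h le_rfl).trans ?_
    rw [rres, sSup_apply, iSup_mul_c]
    exact iSup_le fun Z => cauchy_le_iff.1 Z.2 u v
  · intro h
    have hZ : cauchy (fun w => if w = u then c else ⊥) Y ≤ A := by
      refine cauchy_le_iff.2 fun w v => ?_
      by_cases e : w = u
      · simpa [e] using h v
      · simp [e, mul_comm ⊥, mul_bot_c]
    have hle : (fun w => if w = u then c else ⊥) ≤ rres A Y := le_sSup hZ
    exact (if_pos rfl).ge.trans (hle u)

theorem mul_lres_le (X A : List α → S) (u v : List α) : X u * lres X A v ≤ A (u ++ v) :=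
  le_lres_apply_iff.1 le_rfl u

theorem rres_mul_le (A Y : List α → S) (u v : List α) : rres A Y u * Y v ≤ A (u ++ v) :=
  le_rres_apply_iff.1 le_rfl v

theorem le_rres_lres (X A : List α → S) : X ≤ rres A (lres X A) := fun u =>
  le_rres_apply_iff.2 fun v => mul_lres_le X A u v

theorem isFactorization_closure (X A : List α → S) :
    IsFactorization A (rres A (lres X A)) (lres X A) := by
  refine ⟨cauchy_le_iff.2 (rres_mul_le A _), fun X' Y' hX hY h => ?_⟩
  rw [cauchy_le_iff] at h
  refine ⟨le_antisymm (fun u => le_rres_apply_iff.2 fun v => ?_) hX,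
    le_antisymm (fun v => le_lres_apply_iff.2 fun u => ?_) hY⟩
  · exact (mul_le_mul_left_c _ (hY v)).trans (h u v)
  · exact (mul_le_mul_c ((le_rres_lres X A u).trans (hX u)) le_rfl).trans (h u v)

theorem le_incl_cauchy_letter {X Y A : List α → S} {σ : α} {c : S}
    (h : ∀ u v, X u * Y v * c ≤ A (u ++ σ :: v)) :
    c ≤ incl (cauchy (cauchy X (wordSeries [σ])) Y) A := by
  refine le_iInf fun w => le_sSup ?_
  simp only [Set.mem_ofPred_eq, cauchy, iSup_mul_c, iSup_le_iff]
  rintro x v rfl u s rfl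
  by_cases e : s = [σ]
  · subst e
    simpa [wordSeries] using h u v
  · simp [wordSeries, e, mul_bot_c, mul_comm ⊥]

end Series

section Automaton

variable {S : Type*} [CompleteCSemiring S] {α P : Type*}

theorem deltaStar_mul_le (η : P → α → P → S) (σ : α) (p q : P) (w : List α) (r : P) :
    deltaStar η r w p * η p σ q ≤ deltaStar η r (w ++ [σ]) q := by
  induction w generalizing r with
  | nil =>
    simp only [deltaStar, List.nil_append, iSup_mul_c, one_mul]
    refine iSup_le fun e => ?_
    subst e
    refine le_iSup_of_le q ?_
    simp
  | cons a w ih =>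
    simp only [deltaStar, List.cons_append, iSup_mul_c, mul_assoc]
    exact iSup_mono fun s => mul_le_mul_left_c _ (ih s)

theorem past_mul_le (η : P → α → P → S) (J : P → S) (σ : α) (p q : P) (w : List α) :
    past η J p w * η p σ q ≤ past η J q (w ++ [σ]) := by
  simp only [past, iSup_mul_c, mul_assoc]
  exact iSup_mono fun r => mul_le_mul_left_c _ (deltaStar_mul_le η σ p q w r)

theorem le_past_nil (η : P → α → P → S) (J : P → S) (p : P) : J p ≤ past η J p [] :=
  le_iSup_of_le p (by simp [deltaStar])

theorem past_mul_final_le (η : P → α → P → S) (J G : P → S) (p : P) (w : List α) :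
    past η J p w * G p ≤ behavior η J G w := by
  simp only [past, behavior, iSup_mul_c]
  exact iSup_mono fun r => le_iSup (fun q => J r * deltaStar η r w q * G q) p

/-- Prefixing the letter of a transition `p → q` carries `Past(q) \ A` into `Past(p) \ A`. -/
theorem trans_mul_lres_past_le (A : List α → S) (η : P → α → P → S) (J : P → S) (σ : α)
    (p q : P) (v : List α) :
    η p σ q * lres (past η J q) A v ≤ lres (past η J p) A (σ :: v) := by
  refine le_lres_apply_iff.2 fun u => ?_
  rw [← mul_assoc]
  refine (mul_le_mul_c (past_mul_le η J σ p q u) le_rfl).trans ?_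
  simpa using mul_lres_le (past η J q) A (u ++ [σ]) v

end Automaton

end FPS

open FPS in
/-- the canonical mapping `p ↦ (X_p, Y_p)` with
`Y_p = Past_B(p) \\ A` and `X_p = A / Y_p` sends each state to a factorization
of `A` and is a morphism from `B` into the universal weighted automaton `U_A`. -/
theorem canonical_morphism {S : Type*} [CompleteCSemiring S] {α : Type*}
    {P : Type*} (A : List α → S) (η : P → α → P → S) (J G : P → S)
    (hB : behavior η J G ≤ A) :
    (∀ p : P,
      IsFactorization A (rres A (lres (past η J p) A)) (lres (past η J p) A)) ∧
    ∃ φ : P → Fact A,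
      (∀ p : P, (φ p).1.1 = rres A (lres (past η J p) A)) ∧
      (∀ p : P, (φ p).1.2 = lres (past η J p) A) ∧
      (∀ p : P, J p ≤ JA A (φ p)) ∧
      (∀ p : P, G p ≤ GA A (φ p)) ∧
      (∀ (p q : P) (σ : α), η p σ q ≤ etaA A (φ p) σ (φ q)) := by
  have hF : ∀ p : P,
      IsFactorization A (rres A (lres (past η J p) A)) (lres (past η J p) A) :=
    fun p => isFactorization_closure _ A
  refine ⟨hF, fun p => ⟨(rres A (lres (past η J p) A), lres (past η J p) A), hF p⟩,
    fun _ => rfl, fun _ => rfl, fun p => ?_, fun p => ?_, fun p q σ => ?_⟩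
  · exact (le_past_nil η J p).trans (le_rres_lres (past η J p) A [])
  · refine le_lres_apply_iff.2 fun u => ?_
    rw [List.append_nil]
    exact (past_mul_final_le η J G p u).trans (hB u)
  · refine le_incl_cauchy_letter fun u v => ?_
    change rres A (lres (past η J p) A) u * lres (past η J q) A v * η p σ q ≤ _
    rw [mul_assoc, mul_comm (lres (past η J q) A v)]
    exact (mul_le_mul_left_c _ (trans_mul_lres_past_le A η J σ p q v)).trans
      (rres_mul_le A _ u (σ :: v))
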